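/- arXiv:2502.03585 — 2 statements merged into one kernel-verified Lean document; each statement's English description precedes it below -/
import Mathlib

section
/- Let G be a finite group and F a finite field whose characteristic does not divide the order of G. Then the groupoid of finite-dimensional representations of G over F and their isomorphisms is tame: the family indexed by isomorphism classes of finite-dimensional F-linear representations of G, assigning to each class [V] the real number 1/#Aut(V), is summable. Formally: Summable (fun X : Skeleton (FDRep F G) => ((Nat.card (Aut X)) : ℝ)⁻¹). -/
open CategoryTheory

/-!
By Maschke's theorem `F[G]` is a finite semisimple ring, so a representation, being a finitely
generated `F[G]`-module, is isomorphic to `∏ i, S i ^ n i`, where `S i` runs through the finitely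
many quotients of `F[G]` by maximal left ideals. Some of the `S i` may be isomorphic to each other,
so that `n` involves a choice, but any choice still determines the isomorphism class. Permuting
equal factors embeds `∏ i, Perm (Fin (n i))` into the automorphism group. The family is thus
dominated by `∏ i, 1 / (n i)!`, whose sum over all `n` is a finite power of `e`.
-/

open scoped MonoidAlgebra Nat

universe u v

section Summability

variable {ι : Type*} [Fintype ι]

theorem summable_prod_apply_of_nonneg {κ : ι → Type*} {f : ∀ i, κ i → ℝ}
    (hf₀ : ∀ i k, 0 ≤ f i k) (hf : ∀ i, Summable (f i)) :
    Summable fun x : ∀ i, κ i => ∏ i, f i (x i) := by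
  classical
  have hprod (x : ∀ i, κ i) : 0 ≤ ∏ i, f i (x i) := Finset.prod_nonneg fun i _ => hf₀ i (x i)
  refine summable_of_sum_le (c := ∏ i, ∑' k, f i k) hprod fun s => ?_
  let t (i : ι) : Finset (κ i) := s.image (· i)
  have hst : s ⊆ Fintype.piFinset t := fun x hx =>
    Fintype.mem_piFinset.mpr fun i => Finset.mem_image_of_mem (· i) hx
  calc ∑ x ∈ s, ∏ i, f i (x i)
      ≤ ∑ x ∈ Fintype.piFinset t, ∏ i, f i (x i) :=
        Finset.sum_le_sum_of_subset_of_nonneg hst fun x _ _ => hprod x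
    _ = ∏ i, ∑ k ∈ t i, f i k := (Finset.prod_univ_sum t f).symm
    _ ≤ ∏ i, ∑' k, f i k :=
        Finset.prod_le_prod (fun i _ => Finset.sum_nonneg fun k _ => hf₀ i k)
          fun i _ => (hf i).sum_le_tsum (t i) fun k _ => hf₀ i k

variable (ι) in
theorem summable_inv_prod_factorial :
    Summable fun n : ι → ℕ => ((∏ i, (n i)! : ℕ) : ℝ)⁻¹ := by
  have hexp : Summable fun k : ℕ => (k ! : ℝ)⁻¹ := by
    simpa using Real.summable_pow_div_factorial 1
  simpa using summable_prod_apply_of_nonneg (ι := ι) (fun _ _ => by positivity) fun _ => hexp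

end Summability

section PermutationsOfFactors

variable {A : Type*} [Semiring A] {ι : Type*} {S : ι → Type*}
  [∀ i, AddCommMonoid (S i)] [∀ i, Module A (S i)]

theorem funCongrLeft_injective {N κ κ' : Type*} [AddCommMonoid N] [Module A N] [Nontrivial N] :
    Function.Injective (LinearEquiv.funCongrLeft A N : κ ≃ κ' → (κ' → N) ≃ₗ[A] (κ → N)) := by
  classical
  intro σ τ h
  obtain ⟨x, hx⟩ := exists_ne (0 : N)
  ext k
  have hk : (Pi.single (σ k) x : κ' → N) (σ k) = (Pi.single (σ k) x : κ' → N) (τ k) :=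
    congrFun (LinearEquiv.congr_fun h (Pi.single (σ k) x)) k
  by_contra hne
  rw [Pi.single_eq_same, Pi.single_eq_of_ne' hne] at hk
  exact hx hk

theorem piCongrRight_injective {T : ι → Type*} [∀ i, AddCommMonoid (T i)] [∀ i, Module A (T i)] :
    Function.Injective (LinearEquiv.piCongrRight :
      (∀ i, S i ≃ₗ[A] T i) → (∀ i, S i) ≃ₗ[A] (∀ i, T i)) := by
  classical
  intro e e' h
  ext i x
  simpa using congrFun (LinearEquiv.congr_fun h (Pi.single i x)) i

theorem prod_factorial_le_card_linearEquiv {M : Type*} [AddCommMonoid M] [Module A M]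
    [Finite (M ≃ₗ[A] M)] [Fintype ι] [∀ i, Nontrivial (S i)] {n : ι → ℕ}
    (e : M ≃ₗ[A] ∀ i, Fin (n i) → S i) :
    ∏ i, (n i)! ≤ Nat.card (M ≃ₗ[A] M) := by
  let permute (σ : ∀ i, Equiv.Perm (Fin (n i))) : M ≃ₗ[A] M :=
    e ≪≫ₗ LinearEquiv.piCongrRight (fun i => LinearEquiv.funCongrLeft A (S i) (σ i)) ≪≫ₗ e.symm
  have permute_injective : Function.Injective permute := by
    intro σ τ h
    have hfactors : (fun i => LinearEquiv.funCongrLeft A (S i) (σ i)) =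
        fun i => LinearEquiv.funCongrLeft A (S i) (τ i) :=
      piCongrRight_injective <| LinearEquiv.ext fun y => by
        simpa [permute] using LinearEquiv.congr_fun h (e.symm y)
    exact funext fun i => funCongrLeft_injective (congrFun hfactors i)
  calc ∏ i, (n i)! = Nat.card (∀ i, Equiv.Perm (Fin (n i))) := by
        simp [Nat.card_pi, Fintype.card_perm]
    _ ≤ Nat.card (M ≃ₗ[A] M) := Nat.card_le_card_of_injective permute permute_injective

end PermutationsOfFactors

section SemisimpleModules

variable {A : Type*} [Ring A]

theorem exists_linearEquiv_pi_fin {M : Type*} [AddCommGroup M] [Module A M]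
    [IsSemisimpleModule A M] [Module.Finite A M]
    {ι : Type*} (S : ι → Type*) [∀ i, AddCommMonoid (S i)] [∀ i, Module A (S i)]
    (hS : ∀ N : Submodule A M, IsSimpleModule A N → ∃ i, Nonempty (N ≃ₗ[A] S i)) :
    ∃ n : ι → ℕ, Nonempty (M ≃ₗ[A] ∀ i, Fin (n i) → S i) := by
  classical
  obtain ⟨m, N, e, hN⟩ := IsSemisimpleModule.exists_linearEquiv_fin_dfinsupp A M
  choose type toType using fun j => hS (N j) (hN j)
  let n (i : ι) : ℕ := Fintype.card {j // type j = i}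
  let groupByType : (Σ i, Fin (n i)) ≃ Fin m :=
    (Equiv.sigmaCongrRight fun i => (Fintype.equivFin {j // type j = i}).symm).trans
      (Equiv.sigmaFiberEquiv type)
  have type_groupByType (p : Σ i, Fin (n i)) : type (groupByType p) = p.1 :=
    ((Fintype.equivFin _).symm p.2).2
  have summandEquiv (p : Σ i, Fin (n i)) : Nonempty (N (groupByType p) ≃ₗ[A] S p.1) :=
    type_groupByType p ▸ toType (groupByType p)
  exact ⟨n, ⟨e ≪≫ₗ DFinsupp.linearEquivFunOnFintype ≪≫ₗ
    (LinearEquiv.piCongrLeft A (fun j => N j) groupByType).symm ≪≫ₗ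
    LinearEquiv.piCongrRight (fun p => (summandEquiv p).some) ≪≫ₗ
    LinearEquiv.piCurry A fun i _ => S i⟩⟩

variable [Finite A]

theorem summable_inv_card_linearEquiv {κ : Type*} (M : κ → Type*)
    [∀ k, AddCommGroup (M k)] [∀ k, Module A (M k)]
    [∀ k, IsSemisimpleModule A (M k)] [∀ k, Module.Finite A (M k)]
    (hM : ∀ k l, Nonempty (M k ≃ₗ[A] M l) → k = l) :
    Summable fun k => (Nat.card (M k ≃ₗ[A] M k) : ℝ)⁻¹ := by
  let ι := {I : Ideal A // I.IsMaximal}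
  let S (i : ι) : Type _ := A ⧸ i.1
  have : Finite (Ideal A) := .of_injective _ SetLike.coe_injective
  have : Fintype ι := .ofFinite ι
  have (i : ι) : Nontrivial (S i) := Submodule.Quotient.nontrivial_iff.mpr i.2.ne_top
  have exists_quotient (k : κ) (N : Submodule A (M k)) (hN : IsSimpleModule A N) :
      ∃ i, Nonempty (N ≃ₗ[A] S i) :=
    let ⟨I, hI, e⟩ := isSimpleModule_iff_quot_maximal.mp hN
    ⟨⟨I, hI⟩, e⟩
  choose n e using fun k => exists_linearEquiv_pi_fin S (exists_quotient k)
  have n_injective : Function.Injective n := fun k l h =>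
    hM k l ⟨(e k).some ≪≫ₗ (h ▸ (e l).some).symm⟩
  refine .of_nonneg_of_le (fun k => by positivity) (fun k => ?_)
    ((summable_inv_prod_factorial ι).comp_injective n_injective)
  have : Finite (M k) := Module.finite_of_finite A
  have : Finite (M k ≃ₗ[A] M k) := DFunLike.finite _
  exact inv_anti₀ (by positivity) (mod_cast prod_factorial_le_card_linearEquiv (e k).some)

theorem summable_inv_card_aut_skeleton {C : Type*} [Category* C] (Φ : C ⥤ ModuleCat A)
    [Φ.Full] [Φ.Faithful]
    [∀ X, IsSemisimpleModule A (Φ.obj X)] [∀ X, Module.Finite A (Φ.obj X)] :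
    Summable fun X : Skeleton C => (Nat.card (Aut X) : ℝ)⁻¹ := by
  let M (X : Skeleton C) : ModuleCat A := Φ.obj ((fromSkeleton C).obj X)
  let isoEquiv (X Y : Skeleton C) : (X ≅ Y) ≃ (M X ≃ₗ[A] M Y) :=
    (Functor.FullyFaithful.ofFullyFaithful (fromSkeleton C ⋙ Φ)).isoEquiv.trans
      ⟨Iso.toLinearEquiv, LinearEquiv.toModuleIso, fun _ => rfl, fun _ => rfl⟩
  have card_aut (X : Skeleton C) : Nat.card (Aut X) = Nat.card (M X ≃ₗ[A] M X) :=
    Nat.card_congr (isoEquiv X X)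
  simp only [card_aut]
  exact summable_inv_card_linearEquiv (fun X => M X) fun X Y ⟨e⟩ =>
    skeleton_skeletal C ⟨(isoEquiv X Y).symm e⟩

end SemisimpleModules

theorem moduleFinite_toModuleMonoidAlgebra_obj {R : Type u} [CommRing R] {G : Type v} [Monoid G]
    (V : FDRep R G) :
    Module.Finite R[G] ((forget₂ (FDRep R G) (Rep R G) ⋙ Rep.toModuleMonoidAlgebra).obj V) := by
  let W : Rep R G := (forget₂ (FDRep R G) (Rep R G)).obj V
  have : Module.Finite R W.ρ.asModule := inferInstanceAs (Module.Finite R V)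
  exact .of_restrictScalars_finite R R[G] W.ρ.asModule

theorem fdRep_tame_general (R : Type u) [CommRing R] [Finite R] (G : Type v) [Monoid G] [Finite G]
    [IsSemisimpleRing R[G]] :
    Summable fun X : Skeleton (FDRep R G) => (Nat.card (Aut X) : ℝ)⁻¹ := by
  have : Finite R[G] := Module.finite_of_finite R
  have := moduleFinite_toModuleMonoidAlgebra_obj (R := R) (G := G)
  exact summable_inv_card_aut_skeleton (forget₂ (FDRep R G) (Rep R G) ⋙ Rep.toModuleMonoidAlgebra)

/-- For a finite group `G` and a finite field `F` whose characteristic does not divide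
the order of `G`, the groupoid of finite-dimensional `F`-linear representations of `G`
is tame: the family of reciprocals of the orders of the automorphism groups, indexed by
isomorphism classes, is summable. -/
theorem fdRep_tame (F : Type) [Field F] [Fintype F] (G : Type) [Group G] [Finite G]
    (hchar : ¬ (ringChar F ∣ Nat.card G)) :
    Summable (fun X : Skeleton (FDRep F G) => ((Nat.card (Aut X) : ℝ))⁻¹) := by
  have : NeZero (Nat.card G : F) := ⟨fun h => hchar ((ringChar.spec F _).mp h)⟩
  exact fdRep_tame_general F G
end

section
/- Let G be a finite group. The groupoid cardinality of the groupoid of finite G-sets and G-equivariant bijections equals exp(∑_{[H ≤ G]} 1/#C), where the sum is over conjugacy classes of subgroups H of G, and C is the centralizer in the symmetric group Sym(G⧸H) of the image of the permutation representation θ : G →* Sym(G⧸H) given by left multiplication on cosets. That is, ∑_{[X]} 1/#Aut_G(X) = Real.exp(∑_{[H ≤ G]} (Nat.card (Subgroup.centralizer (Set.range (MulAction.toPermHom G (G⧸H)))))⁻¹), where the left-hand sum is a tsum over isomorphism classes of finite G-sets of the reciprocal of the number of G-equivariant bijections of X with itself. -/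
open CategoryTheory
open scoped Pointwise

/-!
A finite `G`-set is the disjoint union of its orbits, and an orbit is determined up to isomorphism
by the conjugacy class of its stabilizers. So isomorphism classes of finite `G`-sets are multisets
of conjugacy classes `i` of finite-index subgroups. An automorphism of the `G`-set of a multiset `s`
permutes isomorphic orbits and then acts on each of them, so there are `∏ᵢ mᵢ! cᵢ ^ mᵢ` of them,
where `mᵢ` is the multiplicity of `i` in `s` and `cᵢ` the number of automorphisms of the transitive
`G`-set of class `i`. By the multinomial theorem the reciprocals with `#s = n` add up to
`(∑ᵢ 1 / cᵢ) ^ n / n!`, the `n`-th term of `exp (∑ᵢ 1 / cᵢ)`.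
-/

open scoped Nat

universe u

section ExponentialSeries

variable {ι : Type*} [DecidableEq ι]

/-- The term `x ^ s / s!` of the exponential series of `∑ i, x i`, the multiset `s` being read as a
multi-index. -/
noncomputable def expTerm (x : ι → ℝ) (s : Multiset ι) : ℝ :=
  (s.map x).prod / ∏ i ∈ s.toFinset, ((s.count i)! : ℝ)

lemma prod_count_factorial_mul_countPerms (s : Multiset ι) :
    (∏ i ∈ s.toFinset, (s.count i)!) * s.countPerms = s.card ! := by
  have h := Nat.multinomial_spec s.toFinset s.count
  rwa [Multiset.toFinset_sum_count_eq] at h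

lemma expTerm_eq_countPerms_mul_div (x : ι → ℝ) (s : Multiset ι) :
    expTerm x s = s.countPerms * (s.map x).prod / s.card ! := by
  have h : (∏ i ∈ s.toFinset, ((s.count i)! : ℝ)) * s.countPerms = s.card ! :=
    mod_cast prod_count_factorial_mul_countPerms s
  have hs : (s.card ! : ℝ) ≠ 0 := mod_cast s.card.factorial_ne_zero
  rw [← h] at hs ⊢
  rw [expTerm, mul_comm (s.countPerms : ℝ), mul_div_mul_right _ _ (right_ne_zero_of_mul hs)]

lemma expTerm_nonneg {x : ι → ℝ} (hx : 0 ≤ x) (s : Multiset ι) : 0 ≤ expTerm x s :=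
  div_nonneg (Multiset.prod_nonneg (by simpa using fun i _ => hx i))
    (Finset.prod_nonneg fun _ _ => Nat.cast_nonneg _)

lemma sum_sym_expTerm (x : ι → ℝ) (t : Finset ι) (n : ℕ) :
    ∑ s ∈ t.sym n, expTerm x s = (∑ i ∈ t, x i) ^ n / n ! := by
  rw [Finset.sum_pow, Finset.sum_div]
  refine Finset.sum_congr rfl fun s _ => ?_
  rw [expTerm_eq_countPerms_mul_div, Sym.card_coe]
  rfl

lemma hasSum_sym_expTerm {x : ι → ℝ} {t : Finset ι} (ht : ∀ i ∉ t, x i = 0) (n : ℕ) :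
    HasSum (fun s : Sym ι n => expTerm x s) ((∑ i ∈ t, x i) ^ n / n !) := by
  rw [← sum_sym_expTerm]
  refine hasSum_sum_of_ne_finset_zero fun s hs => ?_
  obtain ⟨i, his, hit⟩ : ∃ i ∈ s, i ∉ t := by simpa [Finset.mem_sym_iff] using hs
  exact div_eq_zero_iff.2 (.inl (Multiset.prod_eq_zero (Multiset.mem_map.2 ⟨i, his, ht i hit⟩)))

lemma hasSum_expTerm_of_finset {x : ι → ℝ} (hx : 0 ≤ x) {t : Finset ι}
    (ht : ∀ i ∉ t, x i = 0) : HasSum (expTerm x) (Real.exp (∑ i ∈ t, x i)) := by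
  have hexp : HasSum (fun n : ℕ => (∑ i ∈ t, x i) ^ n / n !) (Real.exp (∑ i ∈ t, x i)) := by
    rw [Real.exp_eq_exp_ℝ]
    exact NormedSpace.expSeries_div_hasSum_exp _
  have hsummable : Summable fun p : Σ n, Sym ι n => expTerm x p.2 := by
    refine (summable_sigma_of_nonneg fun p => expTerm_nonneg hx _).2
      ⟨fun n => (hasSum_sym_expTerm ht n).summable, ?_⟩
    simpa only [(hasSum_sym_expTerm ht _).tsum_eq] using hexp.summable
  have hsigma : HasSum (fun p : Σ n, Sym ι n => expTerm x p.2) (Real.exp (∑ i ∈ t, x i)) := by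
    rw [← (hsummable.hasSum.sigma (hasSum_sym_expTerm ht)).unique hexp]
    exact hsummable.hasSum
  exact (Equiv.sigmaFiberEquiv (Multiset.card (α := ι))).hasSum_iff.1 hsigma

lemma expTerm_mono {x y : ι → ℝ} (hx : 0 ≤ x) (h : x ≤ y) (s : Multiset ι) :
    expTerm x s ≤ expTerm y s :=
  div_le_div_of_nonneg_right
    (Multiset.prod_map_le_prod_map₀ x y (fun i _ => hx i) fun i _ => h i)
    (Finset.prod_nonneg fun _ _ => Nat.cast_nonneg _)

lemma expTerm_congr {x y : ι → ℝ} {s : Multiset ι} (h : ∀ i ∈ s, x i = y i) :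
    expTerm x s = expTerm y s := by
  rw [expTerm, expTerm, Multiset.map_congr rfl h]

/- Finitely many multisets involve only finitely many indices, which reduces both bounds to sums
over a finite index set. -/
theorem hasSum_expTerm {x : ι → ℝ} (hx : 0 ≤ x) {a : ℝ} (ha : HasSum x a) :
    HasSum (expTerm x) (Real.exp a) := by
  have htrunc (t : Finset ι) :
      HasSum (expTerm ((t : Set ι).indicator x)) (Real.exp (∑ i ∈ t, x i)) := by
    have h := hasSum_expTerm_of_finset (Set.indicator_nonneg fun i _ => hx i)
      (x := (t : Set ι).indicator x) (t := t) fun i hi => Set.indicator_of_notMem (by simpa) x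
    rwa [Finset.sum_congr rfl fun i hi => Set.indicator_of_mem (Finset.mem_coe.2 hi) x] at h
  refine hasSum_of_isLUB_of_nonneg _ (expTerm_nonneg hx) ⟨?_, fun b hb => ?_⟩
  · rintro _ ⟨S, rfl⟩
    let t : Finset ι := S.biUnion Multiset.toFinset
    calc ∑ s ∈ S, expTerm x s = ∑ s ∈ S, expTerm ((t : Set ι).indicator x) s :=
          Finset.sum_congr rfl fun s hs => expTerm_congr fun i hi =>
            (Set.indicator_of_mem (by simpa [t] using ⟨s, hs, hi⟩) x).symm
      _ ≤ Real.exp (∑ i ∈ t, x i) :=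
          sum_le_hasSum S (fun s _ => expTerm_nonneg (Set.indicator_nonneg fun i _ => hx i) s)
            (htrunc t)
      _ ≤ Real.exp a := Real.exp_le_exp.2 (sum_le_hasSum t (fun i _ => hx i) ha)
  · refine le_of_tendsto ((Real.continuous_exp.tendsto a).comp ha) (.of_forall fun t => ?_)
    exact hasSum_le_of_sum_le (htrunc t) fun S =>
      (Finset.sum_le_sum fun s _ => expTerm_mono (Set.indicator_nonneg fun i _ => hx i)
        (Set.indicator_le_self' fun i _ => hx i) s).trans (hb ⟨S, rfl⟩)

end ExponentialSeries

/-- Equivariant bijections between two types with an action of `G`: the isomorphisms of `G`-sets. -/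
structure GSetEquiv (G X Y : Type*) [SMul G X] [SMul G Y] extends X ≃ Y where
  map_smul' (g : G) (x : X) : toEquiv (g • x) = g • toEquiv x

section Stabilizers

variable {G X : Type*} [Group G] [MulAction G X]

lemma stabilizer_smul_eq_conjAct_smul (g : G) (x : X) :
    MulAction.stabilizer G (g • x) = ConjAct.toConjAct g • MulAction.stabilizer G x :=
  MulAction.stabilizer_smul_eq_stabilizer_map_conj g x

lemma finiteIndex_stabilizer [Finite X] (x : X) : (MulAction.stabilizer G x).FiniteIndex :=
  have : Finite (G ⧸ MulAction.stabilizer G x) :=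
    .of_injective _ (MulAction.injective_ofQuotientStabilizer G x)
  Subgroup.finiteIndex_of_finite_quotient

lemma existsUnique_out_mem_orbit (x : X) :
    ∃! c : Quotient (MulAction.orbitRel G X), c.out ∈ MulAction.orbit G x := by
  refine ⟨Quotient.mk _ x, Quotient.mk_out (s := MulAction.orbitRel G X) x, fun c hc => ?_⟩
  exact c.out_eq.symm.trans (Quotient.sound hc)

end Stabilizers

namespace GSetEquiv

section Basic

variable {G X Y Z : Type*} [SMul G X] [SMul G Y] [SMul G Z]

lemma toEquiv_injective : Function.Injective (toEquiv : GSetEquiv G X Y → X ≃ Y)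
  | ⟨_, _⟩, ⟨_, _⟩, rfl => rfl

instance : EquivLike (GSetEquiv G X Y) X Y where
  coe e := e.toEquiv
  inv e := e.toEquiv.symm
  left_inv e := e.left_inv
  right_inv e := e.right_inv
  coe_injective' _ _ h _ := toEquiv_injective (DFunLike.coe_injective h)

instance : MulActionHomClass (GSetEquiv G X Y) G X Y where
  map_smulₛₗ e := e.map_smul'

@[ext]
lemma ext {e f : GSetEquiv G X Y} (h : ∀ x, e x = f x) : e = f :=
  DFunLike.ext _ _ h

instance [Finite X] [Finite Y] : Finite (GSetEquiv G X Y) := .of_injective _ toEquiv_injective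

/-- The inverse of an equivariant bijection. -/
def symm (e : GSetEquiv G X Y) : GSetEquiv G Y X where
  toEquiv := e.toEquiv.symm
  map_smul' g y := e.toEquiv.symm_apply_eq.2 <| by
    rw [e.map_smul', Equiv.apply_symm_apply]

lemma apply_symm_apply (e : GSetEquiv G X Y) (y : Y) : e (e.symm y) = y :=
  e.toEquiv.apply_symm_apply y

lemma symm_apply_apply (e : GSetEquiv G X Y) (x : X) : e.symm (e x) = x :=
  e.toEquiv.symm_apply_apply x

/-- The composite of two equivariant bijections. -/
def trans (e : GSetEquiv G X Y) (f : GSetEquiv G Y Z) : GSetEquiv G X Z where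
  toEquiv := e.toEquiv.trans f.toEquiv
  map_smul' g x := by
    rw [Equiv.trans_apply, Equiv.trans_apply, e.map_smul', f.map_smul']

lemma trans_apply (e : GSetEquiv G X Y) (f : GSetEquiv G Y Z) (x : X) : e.trans f x = f (e x) :=
  rfl

/-- The equivariant bijection given by a bijective equivariant map. -/
noncomputable def ofBijective (f : X →[G] Y) (hf : Function.Bijective f) : GSetEquiv G X Y where
  toEquiv := .ofBijective f hf
  map_smul' := map_smul f

/-- Conjugation of equivariant bijections by isomorphisms of source and target. -/
def congr {X' Y' : Type*} [SMul G X'] [SMul G Y'] (e : GSetEquiv G X X')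
    (f : GSetEquiv G Y Y') : GSetEquiv G X Y ≃ GSetEquiv G X' Y' where
  toFun d := (e.symm.trans d).trans f
  invFun d := (e.trans d).trans f.symm
  left_inv d := by ext x; simp only [trans_apply, symm_apply_apply]
  right_inv d := by ext x; simp only [trans_apply, apply_symm_apply]

end Basic

section Centralizer

/-- The centralizer of the permutation representation on `X` is the automorphism group of `X`. -/
def centralizerEquiv (G X : Type*) [Group G] [MulAction G X] :
    Subgroup.centralizer (Set.range (MulAction.toPermHom G X)) ≃ GSetEquiv G X X where
  toFun σ := ⟨σ, fun g => Equiv.ext_iff.1 (Subgroup.mem_centralizer_iff.1 σ.2 _ ⟨g, rfl⟩).symm⟩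
  invFun e := ⟨e.toEquiv, Subgroup.mem_centralizer_iff.2 <| by
    rintro _ ⟨g, rfl⟩
    exact Equiv.ext fun x => (e.map_smul' g x).symm⟩

end Centralizer

section Transitive

variable {G X Y : Type*} [Group G] [MulAction G X] [MulAction G Y]

lemma stabilizer_apply (e : GSetEquiv G X Y) (x : X) :
    MulAction.stabilizer G (e x) = MulAction.stabilizer G x := by
  ext g
  rw [MulAction.mem_stabilizer_iff, MulAction.mem_stabilizer_iff, ← map_smul,
    (EquivLike.injective e).eq_iff]

/-- The orbit-stabilizer theorem for a transitive action. -/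
noncomputable def quotientStabilizer (G : Type*) {X : Type*} [Group G] [MulAction G X]
    [MulAction.IsPretransitive G X] (x : X) :
    GSetEquiv G (G ⧸ MulAction.stabilizer G x) X where
  toEquiv := .ofBijective (MulAction.ofQuotientStabilizer G x)
    ⟨MulAction.injective_ofQuotientStabilizer G x, fun y =>
      let ⟨g, hg⟩ := MulAction.exists_smul_eq G x y
      ⟨g, hg⟩⟩
  map_smul' := MulAction.ofQuotientStabilizer_smul G x

lemma nonempty_quotient_equiv_iff [MulAction.IsPretransitive G X] (H : Subgroup G) (x : X) :
    Nonempty (GSetEquiv G (G ⧸ H) X) ↔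
      H ∈ MulAction.orbit (ConjAct G) (MulAction.stabilizer G x) := by
  constructor
  · rintro ⟨e⟩
    obtain ⟨g, hg⟩ := MulAction.exists_smul_eq G x (e (1 : G))
    exact ⟨ConjAct.toConjAct g, by
      dsimp only
      rw [← stabilizer_smul_eq_conjAct_smul, hg, stabilizer_apply, MulAction.stabilizer_quotient]⟩
  · rintro ⟨g, rfl⟩
    have e := quotientStabilizer G (ConjAct.ofConjAct g • x)
    rw [stabilizer_smul_eq_conjAct_smul, ConjAct.toConjAct_ofConjAct] at e
    exact ⟨e⟩

end Transitive

section Sigma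

variable {G J K : Type*} {X : J → Type*} {Y : K → Type*} [Group G]
  [∀ j, MulAction G (X j)] [∀ k, MulAction G (Y k)]

/-- The equivariant bijection of disjoint unions that matches the summands along `σ`. -/
def sigmaCongr (σ : J ≃ K) (e : ∀ j, GSetEquiv G (X j) (Y (σ j))) :
    GSetEquiv G (Σ j, X j) (Σ k, Y k) where
  toEquiv := σ.sigmaCongr fun j => (e j).toEquiv
  map_smul' g p := Sigma.ext rfl (heq_of_eq ((e p.1).map_smul' g p.2))

variable [∀ j, Nonempty (X j)] [∀ j, MulAction.IsPretransitive G (X j)]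

lemma exists_apply_mk_eq_mk (e : GSetEquiv G (Σ j, X j) (Σ k, Y k)) (j : J) :
    ∃ k, ∀ x : X j, ∃ y : Y k, e ⟨j, x⟩ = ⟨k, y⟩ := by
  let x₀ := Classical.arbitrary (X j)
  refine ⟨(e ⟨j, x₀⟩).1, fun x => ?_⟩
  obtain ⟨g, rfl⟩ := MulAction.exists_smul_eq G x₀ x
  exact ⟨g • (e ⟨j, x₀⟩).2, map_smul e g ⟨j, x₀⟩⟩

variable [∀ k, Nonempty (Y k)] [∀ k, MulAction.IsPretransitive G (Y k)]

lemma exists_eq_sigmaCongr (e : GSetEquiv G (Σ j, X j) (Σ k, Y k)) :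
    ∃ (σ : J ≃ K) (f : ∀ j, GSetEquiv G (X j) (Y (σ j))), sigmaCongr σ f = e := by
  choose σ f hf using exists_apply_mk_eq_mk e
  choose τ f' hf' using exists_apply_mk_eq_mk e.symm
  have hτσ (j : J) (x : X j) : (⟨τ (σ j), f' _ (f j x)⟩ : Σ j, X j) = ⟨j, x⟩ := by
    rw [← hf', ← hf, symm_apply_apply]
  have hστ (k : K) (y : Y k) : (⟨σ (τ k), f _ (f' k y)⟩ : Σ k, Y k) = ⟨k, y⟩ := by
    rw [← hf, ← hf', apply_symm_apply]
  let σ' : J ≃ K :=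
    { toFun := σ
      invFun := τ
      left_inv := fun j => congrArg Sigma.fst (hτσ j (Classical.arbitrary _))
      right_inv := fun k => congrArg Sigma.fst (hστ k (Classical.arbitrary _)) }
  have hsmul (j : J) (g : G) (x : X j) : f j (g • x) = g • f j x := by
    have h := map_smul e g (⟨j, x⟩ : Σ j, X j)
    rw [hf, Sigma.smul_mk, Sigma.smul_mk, hf] at h
    exact sigma_mk_injective h
  have hbij (j : J) : Function.Bijective (f j) := by
    refine ⟨fun x x' h => ?_, fun y => ?_⟩
    · apply sigma_mk_injective (i := j)
      apply EquivLike.injective e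
      rw [hf, hf, h]
    · obtain ⟨g, hg⟩ := MulAction.exists_smul_eq G (f j (Classical.arbitrary _)) y
      exact ⟨g • _, (hsmul j g _).trans hg⟩
  refine ⟨σ', fun j => ofBijective ⟨f j, hsmul j⟩ (hbij j), ?_⟩
  ext ⟨j, x⟩ : 1
  exact (hf j x).symm

/-- An equivariant bijection between disjoint unions of transitive `G`-sets is a matching of the
summands together with equivariant bijections between matched summands. -/
noncomputable def sigmaEquiv :
    (Σ σ : J ≃ K, ∀ j, GSetEquiv G (X j) (Y (σ j))) ≃ GSetEquiv G (Σ j, X j) (Σ k, Y k) := by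
  refine .ofBijective (fun p => sigmaCongr p.1 p.2) ⟨?_, fun e => ?_⟩
  · rintro ⟨σ, f⟩ ⟨σ', f'⟩ h
    have hmk (j : J) (x : X j) : (⟨σ j, f j x⟩ : Σ k, Y k) = ⟨σ' j, f' j x⟩ :=
      DFunLike.congr_fun h ⟨j, x⟩
    obtain rfl : σ = σ' := Equiv.ext fun j => congrArg Sigma.fst (hmk j (Classical.arbitrary _))
    obtain rfl : f = f' := funext fun j => ext fun x => sigma_mk_injective (hmk j x)
    rfl
  · obtain ⟨σ, f, rfl⟩ := exists_eq_sigmaCongr e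
    exact ⟨⟨σ, f⟩, rfl⟩

end Sigma

/-- A `G`-set is the disjoint union of its orbits. -/
def sigmaOrbits (G X : Type*) [Group G] [MulAction G X] :
    GSetEquiv G (Σ ω : MulAction.orbitRel.Quotient G X, ω.orbit) X where
  toEquiv := (MulAction.selfEquivSigmaOrbits' G X).symm
  map_smul' _ _ := rfl

end GSetEquiv

section CountFibers

variable {ι J K : Type*} [Fintype J] [Fintype K]

lemma count_map_univ [DecidableEq ι] (t : J → ι) (i : ι) :
    (Finset.univ.val.map t).count i = Nat.card {j // t j = i} := by
  rw [Multiset.count_map, Nat.card_eq_fintype_card, Fintype.card_subtype, Finset.card_def,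
    Finset.filter_val]
  simp only [eq_comm]

lemma map_univ_eq_iff_exists_equiv {t : J → ι} {u : K → ι} :
    Finset.univ.val.map t = Finset.univ.val.map u ↔ ∃ σ : J ≃ K, ∀ j, u (σ j) = t j := by
  classical
  refine ⟨fun h => ?_, fun ⟨σ, hσ⟩ => ?_⟩
  · have hcard (i : ι) : Nat.card {j // t j = i} = Nat.card {k // u k = i} := by
      rw [← count_map_univ, ← count_map_univ, h]
    exact ⟨.ofFiberEquiv fun i => (Finite.card_eq.1 (hcard i)).some, Equiv.ofFiberEquiv_map _⟩
  · rw [← Multiset.map_univ_val_equiv σ, Multiset.map_map]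
    exact Multiset.map_congr rfl fun j _ => (hσ j).symm

lemma card_perm_comp_eq [DecidableEq ι] [DecidableEq J] (t : J → ι) :
    Fintype.card {σ : Equiv.Perm J // t ∘ σ = t} =
      ∏ i ∈ (Finset.univ.val.map t).toFinset, ((Finset.univ.val.map t).count i)! := by
  rw [DomMulAct.stabilizer_card']
  simp only [count_map_univ, Nat.card_eq_fintype_card]
  rfl

end CountFibers

section TransitiveFamily

open GSetEquiv

variable {G ι : Type*} {X : ι → Type*} [DecidableEq ι] [Group G] [∀ i, MulAction G (X i)]

lemma exists_sigma_equiv {Y : Type u} [Finite Y] [MulAction G Y]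
    (hX : ∀ (Z : Type u) [Finite Z] [Nonempty Z] [MulAction G Z] [MulAction.IsPretransitive G Z],
      ∃ i, Nonempty (GSetEquiv G (X i) Z)) :
    ∃ s : Multiset ι, Nonempty (GSetEquiv G (Σ j : s, X j.1) Y) := by
  have horbit (ω : MulAction.orbitRel.Quotient G Y) : ∃ i, Nonempty (GSetEquiv G (X i) ω.orbit) :=
    have : Nonempty ω.orbit := ω.nonempty_orbit.to_subtype
    hX _
  choose t ht using horbit
  have := Fintype.ofFinite (MulAction.orbitRel.Quotient G Y)
  obtain ⟨σ, hσ⟩ := map_univ_eq_iff_exists_equiv.1 (Finset.univ.val.map t).map_univ_coe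
  have hsummand (j : Finset.univ.val.map t) : Nonempty (GSetEquiv G (X j.1) (σ j).orbit) := by
    rw [← hσ j]
    exact ht (σ j)
  exact ⟨_, ⟨.trans (sigmaCongr σ fun j => (hsummand j).some) (sigmaOrbits G Y)⟩⟩

variable [∀ i, Nonempty (X i)] [∀ i, MulAction.IsPretransitive G (X i)]

lemma eq_of_nonempty_sigma_equiv (hX : ∀ i j, Nonempty (GSetEquiv G (X i) (X j)) → i = j)
    {s t : Multiset ι} (h : Nonempty (GSetEquiv G (Σ j : s, X j.1) (Σ k : t, X k.1))) : s = t := by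
  obtain ⟨e⟩ := h
  obtain ⟨σ, f, -⟩ := exists_eq_sigmaCongr e
  rw [← s.map_univ_coe, ← t.map_univ_coe]
  exact map_univ_eq_iff_exists_equiv.2 ⟨σ, fun j => (hX _ _ ⟨f j⟩).symm⟩

lemma card_sigma_equiv_self {J : Type*} [Fintype J] [∀ i, Finite (X i)]
    (hX : ∀ i j, Nonempty (GSetEquiv G (X i) (X j)) → i = j) (t : J → ι) :
    Nat.card (GSetEquiv G (Σ j, X (t j)) (Σ j, X (t j))) =
      (∏ i ∈ (Finset.univ.val.map t).toFinset, ((Finset.univ.val.map t).count i)!) *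
        ((Finset.univ.val.map t).map fun i => Nat.card (GSetEquiv G (X i) (X i))).prod := by
  classical
  have hcard (σ : Equiv.Perm J) : Nat.card (∀ j, GSetEquiv G (X (t j)) (X (t (σ j)))) =
      if t ∘ σ = t then ∏ j, Nat.card (GSetEquiv G (X (t j)) (X (t j))) else 0 := by
    rw [Nat.card_pi]
    split_ifs with hσ
    · exact Finset.prod_congr rfl fun j _ => by rw [show t (σ j) = t j from congrFun hσ j]
    · obtain ⟨j, hj⟩ := Function.ne_iff.1 hσ
      refine Finset.prod_eq_zero (Finset.mem_univ j) (Nat.card_eq_zero.2 (.inl ?_))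
      exact not_nonempty_iff.1 fun h => hj (hX _ _ h).symm
  calc
    _ = ∑ σ : Equiv.Perm J, Nat.card (∀ j, GSetEquiv G (X (t j)) (X (t (σ j)))) := by
      rw [← Nat.card_congr sigmaEquiv, Nat.card_sigma]
    _ = Fintype.card {σ : Equiv.Perm J // t ∘ σ = t} *
        ∏ j, Nat.card (GSetEquiv G (X (t j)) (X (t j))) := by
      rw [Finset.sum_congr rfl fun σ _ => hcard σ, ← Finset.sum_filter, Finset.sum_const,
        smul_eq_mul, ← Fintype.card_subtype]
    _ = _ := by
      rw [card_perm_comp_eq, Multiset.map_map]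
      rfl

lemma inv_card_sigma_equiv_self [∀ i, Finite (X i)]
    (hX : ∀ i j, Nonempty (GSetEquiv G (X i) (X j)) → i = j) (s : Multiset ι) :
    (Nat.card (GSetEquiv G (Σ j : s, X j.1) (Σ j : s, X j.1)) : ℝ)⁻¹ =
      expTerm (fun i => (Nat.card (GSetEquiv G (X i) (X i)) : ℝ)⁻¹) s := by
  have h := card_sigma_equiv_self hX fun j : s => j.1
  rw [s.map_univ_coe] at h
  rw [h, expTerm, Multiset.prod_map_inv, Nat.cast_mul,
    Nat.cast_prod, Nat.cast_multiset_prod, Multiset.map_map, mul_inv, mul_comm, ← div_eq_mul_inv]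
  rfl

end TransitiveFamily

section IsoClass

variable {G : Type*} [Group G]

/-- Isomorphisms in the category of finite `G`-sets are equivariant bijections. -/
def isoEquivGSetEquiv (A B : Action FintypeCat.{u} G) : (A ≅ B) ≃ GSetEquiv G A.V B.V where
  toFun i :=
    { toEquiv := FintypeCat.equivEquivIso.symm ((Action.forget _ _).mapIso i)
      map_smul' := fun g => ConcreteCategory.congr_hom (i.hom.comm g) }
  invFun e := Action.mkIso (FintypeCat.equivEquivIso e.toEquiv) fun g =>
    ConcreteCategory.hom_ext _ _ (e.map_smul' g)

lemma card_aut_toSkeleton {C : Type*} [Category C] (X : C) :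
    Nat.card (Aut (toSkeleton X)) = Nat.card (X ≅ X) :=
  Nat.card_congr <| (Functor.FullyFaithful.ofFullyFaithful (fromSkeleton C)).isoEquiv.trans <|
    Iso.isoCongr (fromSkeletonToSkeletonIso X) (fromSkeletonToSkeletonIso X)

/-- A model in `Type u` of the finite `G`-set `X`, which may live in another universe. -/
noncomputable def shrinkAction (G X : Type*) [Group G] [MulAction G X] [Finite X] :
    Action FintypeCat.{u} G :=
  letI := Fintype.ofFinite (Shrink.{u} X)
  Action.FintypeCat.ofMulAction G (.of (Shrink.{u} X))

/-- The equivariant bijection between `X` and its model in `Type u`. -/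
noncomputable def equivShrinkAction (G X : Type*) [Group G] [MulAction G X] [Finite X] :
    GSetEquiv G X (shrinkAction.{u} G X).V where
  toEquiv := equivShrink.{u} X
  map_smul' := equivShrink_smul

/-- The isomorphism class of the finite `G`-set `X`. -/
noncomputable def isoClass (G X : Type*) [Group G] [MulAction G X] [Finite X] :
    Skeleton (Action FintypeCat.{u} G) :=
  toSkeleton (shrinkAction G X)

variable {X Y : Type*} [MulAction G X] [MulAction G Y] [Finite X] [Finite Y]

lemma isoClass_eq_iff : isoClass.{u} G X = isoClass G Y ↔ Nonempty (GSetEquiv G X Y) :=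
  (Quotient.eq (r := isIsomorphicSetoid _)).trans
    ((isoEquivGSetEquiv _ _).trans
      (GSetEquiv.congr (equivShrinkAction G X) (equivShrinkAction G Y)).symm).nonempty_congr

lemma isoClass_V (A : Action FintypeCat.{u} G) : isoClass G A.V = toSkeleton A :=
  (Quotient.eq (r := isIsomorphicSetoid _)).2
    ⟨(isoEquivGSetEquiv _ _).symm (equivShrinkAction G A.V).symm⟩

lemma card_aut_isoClass : Nat.card (Aut (isoClass.{u} G X)) = Nat.card (GSetEquiv G X X) :=
  (card_aut_toSkeleton _).trans <| Nat.card_congr <| (isoEquivGSetEquiv _ _).trans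
    (GSetEquiv.congr (equivShrinkAction G X) (equivShrinkAction G X)).symm

end IsoClass

theorem hasSum_inv_card_aut {G ι : Type*} {X : ι → Type*} [Group G] [∀ i, MulAction G (X i)]
    [∀ i, Finite (X i)] [∀ i, Nonempty (X i)] [∀ i, MulAction.IsPretransitive G (X i)]
    (hinj : ∀ i j, Nonempty (GSetEquiv G (X i) (X j)) → i = j)
    (hsurj : ∀ (Y : Type u) [Finite Y] [Nonempty Y] [MulAction G Y] [MulAction.IsPretransitive G Y],
      ∃ i, Nonempty (GSetEquiv G (X i) Y))
    {a : ℝ} (ha : HasSum (fun i => (Nat.card (GSetEquiv G (X i) (X i)) : ℝ)⁻¹) a) :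
    HasSum (fun A : Skeleton (Action FintypeCat.{u} G) => (Nat.card (Aut A) : ℝ)⁻¹)
      (Real.exp a) := by
  classical
  let toIsoClass (s : Multiset ι) : Skeleton (Action FintypeCat.{u} G) :=
    isoClass G (Σ j : s, X j.1)
  have h_bij : Function.Bijective toIsoClass := by
    refine ⟨fun s t h => eq_of_nonempty_sigma_equiv hinj (isoClass_eq_iff.1 h), ?_⟩
    rintro ⟨A⟩
    obtain ⟨s, hs⟩ := exists_sigma_equiv (Y := A.V) hsurj
    exact ⟨s, (isoClass_eq_iff.2 hs).trans (isoClass_V A)⟩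
  rw [← (Equiv.ofBijective toIsoClass h_bij).hasSum_iff]
  refine (hasSum_expTerm (fun i => inv_nonneg.2 (Nat.cast_nonneg _)) ha).congr_fun fun s => ?_
  rw [← inv_card_sigma_equiv_self hinj s, ← card_aut_isoClass.{u}]
  rfl

theorem groupoidCard_finite_G_sets_general {G ι : Type*} [Group G] {H : ι → Subgroup G}
    [∀ i, (H i).FiniteIndex]
    (hH : ∀ (K : Subgroup G) [K.FiniteIndex], ∃! i, H i ∈ MulAction.orbit (ConjAct G) K)
    {a : ℝ} (ha : HasSum (fun i => (Nat.card (Subgroup.centralizer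
      (Set.range (MulAction.toPermHom G (G ⧸ H i)))) : ℝ)⁻¹) a) :
    HasSum (fun X : Skeleton (Action FintypeCat.{u} G) => (Nat.card (Aut X) : ℝ)⁻¹)
      (Real.exp a) := by
  simp only [Nat.card_congr (GSetEquiv.centralizerEquiv G _)] at ha
  refine hasSum_inv_card_aut (fun i j h => ?_) (fun Y _ hY _ _ => ?_) ha
  · rw [GSetEquiv.nonempty_quotient_equiv_iff (H i) ((1 : G) : G ⧸ H j),
      MulAction.stabilizer_quotient] at h
    exact (hH (H j)).unique h (MulAction.mem_orbit_self _)
  · obtain ⟨y⟩ := hY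
    have := finiteIndex_stabilizer (G := G) y
    obtain ⟨i, hi⟩ := (hH (MulAction.stabilizer G y)).exists
    exact ⟨i, (GSetEquiv.nonempty_quotient_equiv_iff (H i) y).2 hi⟩

/-- For a finite group `G`, the groupoid cardinality of the groupoid of finite `G`-sets
and `G`-equivariant bijections equals `exp (∑_{[H ≤ G]} 1 / #C)`, where the sum is over
conjugacy classes of subgroups `H ≤ G` and `C` is the centralizer in `Sym(G ⧸ H)` of the
image of the permutation representation `θ : G →* Sym(G ⧸ H)`. -/
theorem groupoidCard_finite_G_sets (G : Type) [Group G] [Finite G] :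
    ∑' X : Skeleton (Action FintypeCat (MonCat.of G)), ((Nat.card (Aut X) : ℝ))⁻¹ =
      Real.exp (∑ᶠ c : Quotient (MulAction.orbitRel (ConjAct G) (Subgroup G)),
        ((Nat.card (Subgroup.centralizer
          (Set.range (MulAction.toPermHom G (G ⧸ c.out)))) : ℝ))⁻¹) := by
  rw [← tsum_eq_finsum (L := .unconditional _) (Set.toFinite _)]
  exact (groupoidCard_finite_G_sets_general (G := G) (fun K _ => existsUnique_out_mem_orbit K)
    Summable.of_finite.hasSum).tsum_eq
end
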